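/- arXiv:1404.0214 — 2 statements merged into one kernel-verified Lean document; each statement's English description precedes it below -/
import Mathlib

section
/- The function h(d) = ∫_{(arsinh d, ∞)} d / √(sinh² x − d²) dx tends to π/2 as d → ∞. -/
open MeasureTheory Filter Real

/-!
In the variable `s = sinh x`, the half-height `h(d)` is the integral over `(d, ∞)` of the weight
`s / √(1 + s²)` against the density `d / (s √(s² - d²))`. The latter is the derivative of
`arccos (d / s)`, so its total mass is `π / 2` for every `d > 0`. The weight increases to `1`, hence
`d / √(1 + d²) * (π / 2) ≤ h(d) ≤ π / 2`.
-/

theorem monotone_div_sqrt_one_add_sq : Monotone fun s : ℝ => s / √(1 + s ^ 2) := by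
  simpa only [sin_arctan] using sin_arctan_strictMono.monotone

theorem abs_div_sqrt_one_add_sq_le_one (s : ℝ) : |s / √(1 + s ^ 2)| ≤ 1 :=
  sin_arctan s ▸ abs_sin_le_one _

theorem tendsto_div_sqrt_one_add_sq_atTop :
    Tendsto (fun s : ℝ => s / √(1 + s ^ 2)) atTop (nhds 1) := by
  have h : Tendsto (fun s => sin (arctan s)) atTop (nhds (sin (π / 2))) :=
    (continuous_sin.tendsto _).comp (tendsto_nhds_of_tendsto_nhdsWithin tendsto_arctan_atTop)
  simpa only [sin_arctan, sin_pi_div_two] using h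

theorem setIntegral_preimage_sinh {E : Type*} [NormedAddCommGroup E] [NormedSpace ℝ E]
    {S : Set ℝ} (hS : MeasurableSet S) (f : ℝ → E) :
    ∫ x in sinh ⁻¹' S, f (sinh x) = ∫ s in S, (√(1 + s ^ 2))⁻¹ • f s := by
  have preimage_eq_image : sinh ⁻¹' S = arsinh '' S :=
    (sinhEquiv.image_symm_eq_preimage S).symm
  rw [preimage_eq_image, integral_image_eq_integral_abs_deriv_smul hS
    (fun s _ => (hasDerivAt_arsinh s).hasDerivWithinAt) arsinh_injective.injOn]
  simp only [abs_inv, abs_of_nonneg (sqrt_nonneg _), sinh_arsinh]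

/-- The derivative of `s ↦ arcsec (s / d) = arccos (d / s)` on `(d, ∞)`, for `0 < d`. At `s = d` it
takes the junk value `0`. -/
noncomputable def arcsecDensity (d s : ℝ) : ℝ := d / (s * √(s ^ 2 - d ^ 2))

section ArcsecDensity

variable {d s : ℝ}

theorem arcsecDensity_nonneg (hd : 0 ≤ d) (hs : 0 ≤ s) : 0 ≤ arcsecDensity d s :=
  div_nonneg hd (mul_nonneg hs (sqrt_nonneg _))

theorem hasDerivAt_arccos_const_div (hd : 0 < d) (hs : d < s) :
    HasDerivAt (fun s => arccos (d / s)) (arcsecDensity d s) s := by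
  have hs₀ : 0 < s := hd.trans hs
  have hlt : d / s < 1 := (div_lt_one hs₀).2 hs
  have hgt : -1 < d / s := neg_one_lt_zero.trans (div_pos hd hs₀)
  have hsqrt : √(1 - (d / s) ^ 2) = √(s ^ 2 - d ^ 2) / s := by
    rw [div_pow, one_sub_div (pow_pos hs₀ 2).ne', sqrt_div' _ (sq_nonneg s), sqrt_sq hs₀.le]
  have hdiv : HasDerivAt (fun s => d / s) (d * -(s ^ 2)⁻¹) s :=
    (hasDerivAt_inv hs₀.ne').const_mul d
  refine ((hasDerivAt_arccos hgt.ne' hlt.ne).comp s hdiv).congr_deriv ?_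
  rw [hsqrt, arcsecDensity]
  field_simp

theorem continuousAt_arccos_const_div (d : ℝ) (hs : s ≠ 0) :
    ContinuousAt (fun s => arccos (d / s)) s :=
  continuous_arccos.continuousAt.comp (continuousAt_const.div continuousAt_id hs)

theorem tendsto_arccos_const_div_atTop (d : ℝ) :
    Tendsto (fun s => arccos (d / s)) atTop (nhds (π / 2)) := by
  rw [← arccos_zero]
  exact (continuous_arccos.tendsto 0).comp (tendsto_id.const_div_atTop d)

theorem integrableOn_arcsecDensity (hd : 0 < d) : IntegrableOn (arcsecDensity d) (Set.Ioi d) :=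
  integrableOn_Ioi_deriv_of_nonneg (continuousAt_arccos_const_div d hd.ne').continuousWithinAt
    (fun _ hs => hasDerivAt_arccos_const_div hd hs)
    (fun _ hs => arcsecDensity_nonneg hd.le (hd.trans hs).le) (tendsto_arccos_const_div_atTop d)

theorem integral_arcsecDensity (hd : 0 < d) : ∫ s in Set.Ioi d, arcsecDensity d s = π / 2 := by
  rw [integral_Ioi_of_hasDerivAt_of_tendsto
    (continuousAt_arccos_const_div d hd.ne').continuousWithinAt
    (fun _ hs => hasDerivAt_arccos_const_div hd hs) (integrableOn_arcsecDensity hd)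
    (tendsto_arccos_const_div_atTop d), div_self hd.ne', arccos_one, sub_zero]

end ArcsecDensity

/-- The asymptotic half-height `h(d)` of the minimal catenoid `C_d` in `ℍ² × ℝ`. -/
noncomputable def catenoidHalfHeight (d : ℝ) : ℝ :=
  ∫ x in Set.Ioi (arsinh d), d / √(sinh x ^ 2 - d ^ 2)

section CatenoidHalfHeight

variable {d : ℝ}

theorem catenoidHalfHeight_eq_integral_mul_arcsecDensity (hd : 0 ≤ d) :
    catenoidHalfHeight d = ∫ s in Set.Ioi d, s / √(1 + s ^ 2) * arcsecDensity d s := by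
  have preimage_sinh : Set.Ioi (arsinh d) = sinh ⁻¹' Set.Ioi d :=
    Set.ext fun _ => sinhOrderIso.symm_apply_lt
  rw [catenoidHalfHeight, preimage_sinh,
    setIntegral_preimage_sinh measurableSet_Ioi fun s => d / √(s ^ 2 - d ^ 2)]
  refine setIntegral_congr_fun measurableSet_Ioi fun s hs => ?_
  have hs₀ : s ≠ 0 := (hd.trans_lt hs).ne'
  simp only [arcsecDensity, smul_eq_mul]
  field_simp

theorem integrableOn_div_sqrt_one_add_sq_mul_arcsecDensity (hd : 0 < d) :
    IntegrableOn (fun s => s / √(1 + s ^ 2) * arcsecDensity d s) (Set.Ioi d) :=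
  (integrableOn_arcsecDensity hd).bdd_mul
    monotone_div_sqrt_one_add_sq.measurable.aestronglyMeasurable
    (ae_of_all _ abs_div_sqrt_one_add_sq_le_one)

theorem catenoidHalfHeight_le_pi_div_two (hd : 0 < d) : catenoidHalfHeight d ≤ π / 2 := by
  rw [catenoidHalfHeight_eq_integral_mul_arcsecDensity hd.le, ← integral_arcsecDensity hd]
  refine setIntegral_mono_on (integrableOn_div_sqrt_one_add_sq_mul_arcsecDensity hd)
    (integrableOn_arcsecDensity hd) measurableSet_Ioi fun s hs => ?_
  exact mul_le_of_le_one_left (arcsecDensity_nonneg hd.le (hd.trans hs).le)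
    (abs_le.1 (abs_div_sqrt_one_add_sq_le_one s)).2

theorem mul_pi_div_two_le_catenoidHalfHeight (hd : 0 < d) :
    d / √(1 + d ^ 2) * (π / 2) ≤ catenoidHalfHeight d := by
  rw [catenoidHalfHeight_eq_integral_mul_arcsecDensity hd.le, ← integral_arcsecDensity hd,
    ← integral_const_mul]
  refine setIntegral_mono_on ((integrableOn_arcsecDensity hd).const_mul _)
    (integrableOn_div_sqrt_one_add_sq_mul_arcsecDensity hd) measurableSet_Ioi fun s hs => ?_
  exact mul_le_mul_of_nonneg_right (monotone_div_sqrt_one_add_sq (Set.mem_Ioi.1 hs).le)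
    (arcsecDensity_nonneg hd.le (hd.trans hs).le)

end CatenoidHalfHeight

theorem catenoid_half_height_tendsto_pi_div_two :
    Filter.Tendsto
      (fun d : ℝ =>
        ∫ x in Set.Ioi (Real.arsinh d),
          d / Real.sqrt (Real.sinh x ^ 2 - d ^ 2))
      Filter.atTop (nhds (Real.pi / 2)) := by
  change Tendsto catenoidHalfHeight atTop (nhds (π / 2))
  have lower_bound_tendsto :
      Tendsto (fun d : ℝ => d / √(1 + d ^ 2) * (π / 2)) atTop (nhds (π / 2)) := by
    simpa only [one_mul] using tendsto_div_sqrt_one_add_sq_atTop.mul_const (π / 2)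
  exact tendsto_of_tendsto_of_tendsto_of_le_of_le' lower_bound_tendsto tendsto_const_nhds
    ((eventually_gt_atTop 0).mono fun _ => mul_pi_div_two_le_catenoidHalfHeight)
    ((eventually_gt_atTop 0).mono fun _ => catenoidHalfHeight_le_pi_div_two)
end

section
/- The function h(d) = ∫_{(arsinh d, ∞)} d / √(sinh² x − d²) dx is strictly monotone increasing on (0, ∞): for all real numbers 0 < d₁ < d₂ one has h(d₁) < h(d₂). -/
open MeasureTheory Real

/-!
The domain of integration shrinks as `d` grows and the integrand is singular at its endpoint, so the
two integrals cannot be compared directly. The substitution `sinh x = d * cosh u` turns the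
half-height into `∫ u in (0, ∞), d / √(1 + (d * cosh u) ^ 2)`, whose domain is fixed and whose
integrand is strictly increasing in `d` and dominated by `1 / cosh u` uniformly in `d`.
-/

lemma strictMono_div_sqrt_one_add_mul_sq (c : ℝ) :
    StrictMono fun t : ℝ => t / √(1 + (t * c) ^ 2) := by
  refine strictMono_of_odd_strictMonoOn_nonneg (fun t => by simp [neg_div]) fun a ha b _ hab => ?_
  have hb : 0 < b := lt_of_le_of_lt ha hab
  rw [div_lt_div_iff₀ (by positivity) (by positivity)]
  refine lt_of_pow_lt_pow_left₀ 2 (by positivity) ?_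
  calc (a * √(1 + (b * c) ^ 2)) ^ 2 = a ^ 2 + (a * b * c) ^ 2 := by
        rw [mul_pow, sq_sqrt (by positivity)]
        ring
    _ < b ^ 2 + (a * b * c) ^ 2 := by gcongr
    _ = (b * √(1 + (a * c) ^ 2)) ^ 2 := by
        rw [mul_pow b, sq_sqrt (by positivity)]
        ring

lemma abs_div_sqrt_one_add_mul_sq_le {c : ℝ} (hc : c ≠ 0) (t : ℝ) :
    |t / √(1 + (t * c) ^ 2)| ≤ |c⁻¹| := by
  have hle : |t * c| ≤ √(1 + (t * c) ^ 2) := abs_le_sqrt (by linarith)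
  rw [abs_div, abs_of_nonneg (sqrt_nonneg _), abs_inv, div_le_iff₀ (by positivity),
    inv_mul_eq_div, le_div_iff₀ (abs_pos.2 hc), ← abs_mul]
  exact hle

section Integral

variable {α : Type*} [MeasurableSpace α] {μ : Measure α}

lemma integral_lt_integral_of_ae_lt [NeZero μ] {f g : α → ℝ} (hf : Integrable f μ)
    (hg : Integrable g μ) (hfg : ∀ᵐ x ∂μ, f x < g x) : ∫ x, f x ∂μ < ∫ x, g x ∂μ := by
  have hle : f ≤ᵐ[μ] g := hfg.mono fun _ => le_of_lt
  refine (integral_mono_ae hf hg hle).lt_of_ne fun heq => ?_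
  obtain ⟨x, hlt, hx⟩ := (hfg.and ((integral_eq_iff_of_ae_le hf hg hle).1 heq)).exists
  exact hlt.ne hx

lemma strictMono_integral_div_sqrt_one_add_mul_sq [NeZero μ] {g : α → ℝ}
    (hg : Integrable (fun x => (g x)⁻¹) μ) (hg₀ : ∀ᵐ x ∂μ, g x ≠ 0) :
    StrictMono fun t : ℝ => ∫ x, t / √(1 + (t * g x) ^ 2) ∂μ := by
  have hgm : AEMeasurable g μ := hg.aemeasurable.inv.congr (ae_of_all _ fun x => inv_inv (g x))
  have hint (t : ℝ) : Integrable (fun x => t / √(1 + (t * g x) ^ 2)) μ :=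
    hg.mono (AEMeasurable.aestronglyMeasurable (by fun_prop))
      (hg₀.mono fun x hx => abs_div_sqrt_one_add_mul_sq_le hx t)
  exact fun a b hab => integral_lt_integral_of_ae_lt (hint a) (hint b)
    (ae_of_all _ fun x => strictMono_div_sqrt_one_add_mul_sq (g x) hab)

end Integral

lemma integrable_inv_cosh : Integrable fun u : ℝ => (cosh u)⁻¹ := by
  -- The substitution `x = sinh u` turns `dx / (1 + x ^ 2)` into `du / cosh u`.
  have h := (integrableOn_image_iff_integrableOn_deriv_smul_of_monotoneOn MeasurableSet.univ
    (fun u _ => (hasDerivAt_sinh u).hasDerivWithinAt) (sinh_strictMono.monotone.monotoneOn _)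
    fun x => (1 + x ^ 2)⁻¹).1 integrable_inv_one_add_sq.integrableOn
  refine (integrableOn_univ.1 h).congr (ae_of_all _ fun u => ?_)
  have hu : cosh u ≠ 0 := (cosh_pos u).ne'
  simp only [smul_eq_mul, add_comm 1 (sinh u ^ 2), ← cosh_sq]
  rw [sq, mul_inv_rev, mul_inv_cancel_left₀ hu]

section Substitution

lemma image_cosh_Ioi_zero : cosh '' Set.Ioi 0 = Set.Ioi 1 :=
  Set.Subset.antisymm (Set.image_subset_iff.2 fun _ hu => one_lt_cosh.2 (ne_of_gt hu))
    fun x hx => ⟨arcosh x, arcosh_pos hx, cosh_arcosh (le_of_lt hx)⟩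

lemma image_arsinh_Ioi (a : ℝ) : arsinh '' Set.Ioi a = Set.Ioi (arsinh a) :=
  sinhOrderIso.symm.image_Ioi a

variable {d : ℝ}

lemma image_arsinh_mul_cosh_Ioi_zero (hd : 0 < d) :
    (fun u => arsinh (d * cosh u)) '' Set.Ioi 0 = Set.Ioi (arsinh d) := by
  rw [← Set.image_image arsinh, ← Set.image_image (d * ·), image_cosh_Ioi_zero,
    Set.image_mul_left_Ioi hd, mul_one, image_arsinh_Ioi]

lemma integral_Ioi_arsinh {E : Type*} [NormedAddCommGroup E] [NormedSpace ℝ E] (hd : 0 < d)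
    (f : ℝ → E) :
    ∫ x in Set.Ioi (arsinh d), f x =
      ∫ u in Set.Ioi 0, ((√(1 + (d * cosh u) ^ 2))⁻¹ * (d * sinh u)) • f (arsinh (d * cosh u)) := by
  have hderiv (u : ℝ) : HasDerivAt (fun u => arsinh (d * cosh u))
      ((√(1 + (d * cosh u) ^ 2))⁻¹ * (d * sinh u)) u :=
    ((hasDerivAt_cosh u).const_mul d).arsinh
  have hmono : MonotoneOn (fun u => arsinh (d * cosh u)) (Set.Ioi 0) := fun u hu v hv huv =>
    arsinh_le_arsinh.2 (mul_le_mul_of_nonneg_left (cosh_strictMonoOn.monotoneOn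
      (Set.Ioi_subset_Ici_self hu) (Set.Ioi_subset_Ici_self hv) huv) hd.le)
  rw [← image_arsinh_mul_cosh_Ioi_zero hd]
  exact integral_image_eq_integral_deriv_smul_of_monotoneOn measurableSet_Ioi
    (fun u _ => (hderiv u).hasDerivWithinAt) hmono f

lemma integral_div_sqrt_sinh_sq_sub_sq (hd : 0 < d) :
    ∫ x in Set.Ioi (arsinh d), d / √(sinh x ^ 2 - d ^ 2) =
      ∫ u in Set.Ioi (0 : ℝ), d / √(1 + (d * cosh u) ^ 2) := by
  rw [integral_Ioi_arsinh hd]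
  refine setIntegral_congr_fun measurableSet_Ioi fun u hu => ?_
  have hs : 0 < sinh u := sinh_pos_iff.2 hu
  have hsqrt : √((d * cosh u) ^ 2 - d ^ 2) = d * sinh u := by
    rw [sqrt_eq_iff_mul_self_eq_of_pos (by positivity), mul_pow, cosh_sq]
    ring
  simp only [sinh_arsinh, smul_eq_mul, hsqrt]
  field_simp

end Substitution

theorem catenoid_half_height_strictMono
    (d₁ d₂ : ℝ) (h₁ : 0 < d₁) (h₁₂ : d₁ < d₂) :
    (∫ x in Set.Ioi (Real.arsinh d₁),
        d₁ / Real.sqrt (Real.sinh x ^ 2 - d₁ ^ 2))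
      < ∫ x in Set.Ioi (Real.arsinh d₂),
          d₂ / Real.sqrt (Real.sinh x ^ 2 - d₂ ^ 2) := by
  have : NeZero (volume.restrict (Set.Ioi (0 : ℝ))) := ⟨by simp⟩
  rw [integral_div_sqrt_sinh_sq_sub_sq h₁, integral_div_sqrt_sinh_sq_sub_sq (h₁.trans h₁₂)]
  exact strictMono_integral_div_sqrt_one_add_mul_sq integrable_inv_cosh.integrableOn
    (ae_of_all _ fun u => (cosh_pos u).ne') h₁₂
end
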